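/- Let d ≥ 1 and let θ_1, …, θ_d be real numbers such that π, θ_1, …, θ_d are linearly independent over ℚ. Let α, β_1, …, β_d, ω_1, …, ω_d be real numbers such that α ≠ 0 or some β_j ≠ 0, and let (x_k)_{k≥1} be a sequence of real numbers with x_k → 0. Then the limit as n → ∞ of (1/n)·#{1 ≤ k ≤ n : α + ∑_{j=1}^{d} β_j sin(kθ_j + ω_j) > x_k} exists and equals (1/(2π)^d) times the Lebesgue measure of {y ∈ [0, 2π]^d : α + ∑_{j=1}^{d} β_j sin(y_j) > 0}. -/

import Mathlib

open MeasureTheory Filter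
open scoped Topology ENNReal

/-!
Modulo `2π`, the points `kθ + ω` form an orbit of a translation of the torus. A nontrivial
character is an eigenfunction of this translation, and the linear independence of `π, θ_1, …, θ_d`
says that its eigenvalue is not `1`; therefore its integral vanishes and its averages along the
orbit tend to `0`. As the characters span a dense space of continuous functions, the orbit is
equidistributed (Weyl). Hence the values of `α + ∑ β_j sin` along the orbit have a weak limit
distribution, which is insensitive to the perturbation `x_k → 0` and charges `(0, ∞)` as asserted
by the portmanteau theorem, provided that `0` is not an atom. It is not one: if `β_i ≠ 0`, every
line parallel to the `i`-th axis meets the zero set in a countable set.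
-/

section WeakConvergence

variable {X 𝕜 : Type*} [TopologicalSpace X] [CompactSpace X] [MeasurableSpace X]
  [OpensMeasurableSpace X] [RCLike 𝕜]

lemma integrable_continuousMap (μ : Measure X) [IsFiniteMeasure μ] (f : C(X, 𝕜)) :
    Integrable f μ :=
  (BoundedContinuousFunction.mkOfCompact f).integrable μ

lemma lipschitzWith_integral_continuousMap (μ : Measure X) [IsProbabilityMeasure μ] :
    LipschitzWith 1 fun f : C(X, 𝕜) => ∫ y, f y ∂μ := by
  refine .of_dist_le_mul fun f g => ?_
  rw [dist_eq_norm,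
    ← integral_sub (integrable_continuousMap μ f) (integrable_continuousMap μ g)]
  simpa [dist_eq_norm] using
    norm_integral_le_of_norm_le_const (μ := μ) (.of_forall (f - g).norm_coe_le_norm)

lemma isClosed_setOfPred_tendsto_integral {ι : Type*} (l : Filter ι)
    (νs : ι → ProbabilityMeasure X) (ν : ProbabilityMeasure X) :
    IsClosed {f : C(X, 𝕜) | Tendsto (fun i => ∫ y, f y ∂(νs i : Measure X)) l
      (𝓝 (∫ y, f y ∂(ν : Measure X)))} :=
  (LipschitzWith.uniformEquicontinuous _ 1 fun i =>
    lipschitzWith_integral_continuousMap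
      (νs i : Measure X)).equicontinuous.isClosed_setOfPred_tendsto
    (lipschitzWith_integral_continuousMap (ν : Measure X)).continuous

lemma tendsto_probabilityMeasure_of_span_dense {ι : Type*} {l : Filter ι}
    {νs : ι → ProbabilityMeasure X} {ν : ProbabilityMeasure X} {S : Set C(X, 𝕜)}
    (hS : (Submodule.span 𝕜 S).topologicalClosure = ⊤)
    (h : ∀ f ∈ S, Tendsto (fun i => ∫ y, f y ∂(νs i : Measure X)) l
      (𝓝 (∫ y, f y ∂(ν : Measure X)))) :
    Tendsto νs l (𝓝 ν) := by
  refine (ProbabilityMeasure.tendsto_iff_forall_integral_rclike_tendsto 𝕜).2 fun f => ?_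
  have hinteg (μ : ProbabilityMeasure X) := integrable_continuousMap (𝕜 := 𝕜) (μ : Measure X)
  have hspan : (Submodule.span 𝕜 S : Set C(X, 𝕜)) ⊆
      {g | Tendsto (fun i => ∫ y, g y ∂(νs i : Measure X)) l
        (𝓝 (∫ y, g y ∂(ν : Measure X)))} := fun g hg => by
    induction hg using Submodule.span_induction with
    | mem g hg => exact h g hg
    | zero => simp [tendsto_const_nhds]
    | add g₁ g₂ _ _ h₁ h₂ => simpa [integral_add (hinteg _ g₁) (hinteg _ g₂)] using h₁.add h₂
    | smul c g _ hg => simpa [integral_const_mul] using hg.const_mul c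
  have hf : f.toContinuousMap ∈ closure (Submodule.span 𝕜 S : Set C(X, 𝕜)) := by
    simp [← Submodule.topologicalClosure_coe, hS]
  exact (isClosed_setOfPred_tendsto_integral l νs ν).closure_subset_iff.2 hspan hf

end WeakConvergence

section Equidistribution

variable {X : Type*} [MeasurableSpace X] {p q : ℕ → X} {μ : ProbabilityMeasure X}

/-- The empirical measure of the sequence `p`: the uniform distribution on `p 0, …, p n`, counted
with multiplicity. Using `n + 1` terms makes it a probability measure for every `n`. -/
noncomputable def empiricalMeasure (p : ℕ → X) (n : ℕ) : ProbabilityMeasure X :=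
  ⟨((n + 1 : ℕ) : ℝ≥0∞)⁻¹ • ∑ k ∈ Finset.range (n + 1), Measure.dirac (p k), ⟨by
    simpa using ENNReal.inv_mul_cancel (a := (n + 1 : ℕ)) (by simp) (by finiteness)⟩⟩

lemma integral_empiricalMeasure [MeasurableSingletonClass X] {E : Type*} [NormedAddCommGroup E]
    [NormedSpace ℝ E] [CompleteSpace E] (p : ℕ → X) (n : ℕ) (f : X → E) :
    ∫ y, f y ∂(empiricalMeasure p n : Measure X) =
      ((n + 1 : ℕ) : ℝ)⁻¹ • ∑ k ∈ Finset.range (n + 1), f (p k) := by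
  simp only [empiricalMeasure, ProbabilityMeasure.coe_mk, integral_smul_measure]
  rw [integral_finsetSum_measure fun _ _ => integrable_dirac (by finiteness)]
  simp [-Nat.cast_add]

lemma empiricalMeasure_real_apply [MeasurableSingletonClass X] (p : ℕ → X) (n : ℕ) (s : Set X)
    [DecidablePred (· ∈ s)] :
    (empiricalMeasure p n : Measure X).real s =
      (Nat.count (p · ∈ s) (n + 1) : ℝ) / (n + 1 : ℕ) := by
  simp [empiricalMeasure, measureReal_def, Set.indicator_apply, Nat.count_eq_card_filter_range,
    div_eq_inv_mul, Finset.sum_boole, -Nat.cast_add]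

lemma map_empiricalMeasure {Y : Type*} [MeasurableSpace Y] (p : ℕ → X) (n : ℕ) {g : X → Y}
    (hg : Measurable g) :
    (empiricalMeasure p n).map hg.aemeasurable = empiricalMeasure (g ∘ p) n := by
  ext1
  simp [empiricalMeasure, ProbabilityMeasure.map, Measure.map_smul,
    Measure.map_finset_sum hg.aemeasurable, Measure.map_dirac' hg]

/-- The sequence `p` is equidistributed with respect to `μ`: its empirical measures converge
weakly to `μ`. -/
def Equidistributed [TopologicalSpace X] [OpensMeasurableSpace X] (p : ℕ → X)
    (μ : ProbabilityMeasure X) : Prop :=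
  Tendsto (empiricalMeasure p) atTop (𝓝 μ)

lemma equidistributed_of_span_dense {𝕜 : Type*} [RCLike 𝕜] [TopologicalSpace X] [CompactSpace X]
    [OpensMeasurableSpace X] [MeasurableSingletonClass X] {S : Set C(X, 𝕜)}
    (hS : (Submodule.span 𝕜 S).topologicalClosure = ⊤)
    (h : ∀ f ∈ S, Tendsto (fun n : ℕ => (n : ℝ)⁻¹ • ∑ k ∈ Finset.range n, f (p k)) atTop
      (𝓝 (∫ y, f y ∂(μ : Measure X)))) :
    Equidistributed p μ :=
  tendsto_probabilityMeasure_of_span_dense hS fun f hf => by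
    simpa only [integral_empiricalMeasure] using (tendsto_add_atTop_iff_nat 1).2 (h f hf)

namespace Equidistributed

lemma map [TopologicalSpace X] [OpensMeasurableSpace X] {Y : Type*} [TopologicalSpace Y]
    [MeasurableSpace Y] [BorelSpace Y] (h : Equidistributed p μ) {g : X → Y}
    (hg : Continuous g) :
    Equidistributed (g ∘ p) (μ.map hg.measurable.aemeasurable) :=
  (ProbabilityMeasure.tendsto_map_of_tendsto_of_continuous _ _ h hg).congr fun n =>
    map_empiricalMeasure p n hg.measurable

lemma of_tendsto_dist [PseudoMetricSpace X] [OpensMeasurableSpace X] [MeasurableSingletonClass X]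
    (hp : Equidistributed p μ) (hpq : Tendsto (fun k => dist (q k) (p k)) atTop (𝓝 0)) :
    Equidistributed q μ := by
  refine tendsto_iff_forall_lipschitz_integral_tendsto.2 fun f hbdd ⟨L, hL⟩ => ?_
  have hlim := tendsto_iff_forall_lipschitz_integral_tendsto.1 hp f hbdd ⟨L, hL⟩
  have hdiff : Tendsto (fun k => f (q k) - f (p k)) atTop (𝓝 0) :=
    squeeze_zero_norm (fun k => hL.dist_le_mul (q k) (p k)) (by simpa using hpq.const_mul (L : ℝ))
  have hmean := (tendsto_add_atTop_iff_nat 1).2 hdiff.cesaro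
  simpa [integral_empiricalMeasure, Finset.sum_sub_distrib, mul_sub] using hlim.add hmean

lemma tendsto_count_div [TopologicalSpace X] [OpensMeasurableSpace X] [MeasurableSingletonClass X]
    [HasOuterApproxClosed X] (h : Equidistributed p μ) {s : Set X} [DecidablePred (· ∈ s)]
    (hs : (μ : Measure X) (frontier s) = 0) :
    Tendsto (fun n : ℕ => (Nat.count (p · ∈ s) n : ℝ) / n) atTop (𝓝 ((μ : Measure X).real s)) := by
  rw [← tendsto_add_atTop_iff_nat 1]
  simp_rw [← empiricalMeasure_real_apply]
  exact (ENNReal.tendsto_toReal (measure_ne_top _ s)).comp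
    (ProbabilityMeasure.tendsto_measure_of_null_frontier_of_tendsto' h hs)

lemma tendsto_count_lt_div [TopologicalSpace X] [OpensMeasurableSpace X]
    (h : Equidistributed p μ) {F : X → ℝ} (hF : Continuous F)
    (hF0 : ∀ᵐ y ∂(μ : Measure X), F y ≠ 0) {x : ℕ → ℝ} (hx : Tendsto x atTop (𝓝 0))
    [DecidablePred fun k => x k < F (p k)] :
    Tendsto (fun n : ℕ => (Nat.count (fun k => x k < F (p k)) n : ℝ) / n) atTop
      (𝓝 ((μ : Measure X).real {y | 0 < F y})) := by
  have hdist : Tendsto (fun k => dist (F (p k) - x k) (F (p k))) atTop (𝓝 0) := by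
    simpa using hx.abs
  have hfr : (μ.map hF.measurable.aemeasurable : Measure ℝ) (frontier (Set.Ioi 0)) = 0 := by
    rw [frontier_Ioi, μ.map_apply' _ (measurableSet_singleton 0)]
    exact measure_eq_zero_iff_ae_notMem.2 hF0
  have hlim := ((h.map hF).of_tendsto_dist hdist).tendsto_count_div hfr
  rw [measureReal_def, μ.map_apply' _ measurableSet_Ioi] at hlim
  refine hlim.congr fun n => ?_
  simp only [Set.mem_Ioi, sub_pos]

end Equidistributed

end Equidistribution

section Birkhoff

variable {X 𝕜 : Type*} [RCLike 𝕜] {f : X → X} {g : X → 𝕜} {z : 𝕜}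

lemma tendsto_birkhoffAverage_of_eigenfunction (hz : z ≠ 1)
    (hg : Bornology.IsBounded (Set.range g)) (hfg : ∀ x, g (f x) = z * g x) (x : X) :
    Tendsto (birkhoffAverage ℝ f g · x) atTop (𝓝 0) := by
  have havg (n : ℕ) : birkhoffAverage ℝ f g n (f x) = z * birkhoffAverage ℝ f g n x := by
    simp [birkhoffAverage, birkhoffSum, ← Function.iterate_succ_apply,
      Function.iterate_succ_apply', hfg, ← Finset.mul_sum]
  have hdiff := (tendsto_birkhoffAverage_apply_sub_birkhoffAverage' ℝ hg f x).const_mul (z - 1)⁻¹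
  refine (mul_zero (z - 1)⁻¹ ▸ hdiff).congr fun n => ?_
  rw [havg, ← sub_one_mul, inv_mul_cancel_left₀ (sub_ne_zero.2 hz)]

lemma integral_eq_zero_of_eigenfunction [MeasurableSpace X] {μ : Measure X}
    (hz : z ≠ 1) (hf : MeasurePreserving f μ μ) (hemb : MeasurableEmbedding f)
    (hfg : ∀ x, g (f x) = z * g x) : ∫ x, g x ∂μ = 0 := by
  have h := hf.integral_comp hemb g
  simp only [hfg, integral_const_mul] at h
  exact (mul_left_eq_self₀.1 h).resolve_left hz

end Birkhoff

section Torus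

open UnitAddTorus

variable {ι : Type*}

/-- The point of the torus `(ℝ/ℤ)^ι` whose coordinates have the given angles, measured in
radians. -/
noncomputable def torusOfAngles : (ι → ℝ) →+ UnitAddTorus ι where
  toFun y j := (y j / (2 * Real.pi) : ℝ)
  map_zero' := by ext; simp
  map_add' y z := by ext; simp [add_div]

lemma torusOfAngles_apply (y : ι → ℝ) (j : ι) :
    torusOfAngles y j = (y j / (2 * Real.pi) : ℝ) := rfl

variable [Fintype ι]

instance : IsProbabilityMeasure (volume : Measure UnitAddCircle) :=
  ⟨UnitAddCircle.measure_univ⟩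

lemma mFourier_apply_add (m : ι → ℤ) (x y : UnitAddTorus ι) :
    mFourier m (x + y) = mFourier m x * mFourier m y := by
  simp [mFourier, AddCircle.toCircle_add, Finset.prod_mul_distrib]

lemma equidistributed_nsmul_add {a : UnitAddTorus ι} (ha : ∀ m : ι → ℤ, m ≠ 0 → mFourier m a ≠ 1)
    (b : UnitAddTorus ι) :
    Equidistributed (fun n : ℕ => n • a + b) ⟨volume, inferInstance⟩ := by
  refine equidistributed_of_span_dense span_mFourier_closure_eq_top ?_
  rintro _ ⟨m, rfl⟩
  rcases eq_or_ne m 0 with rfl | hm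
  · refine tendsto_const_nhds.congr' ?_
    filter_upwards [eventually_ne_atTop 0] with n hn
    simp [mFourier_zero, hn]
  have hmap (x : UnitAddTorus ι) : mFourier m (a + x) = mFourier m a * mFourier m x :=
    mFourier_apply_add m a x
  have hbdd : Bornology.IsBounded (Set.range (mFourier m)) :=
    (isCompact_range (mFourier m).continuous).isBounded
  rw [ProbabilityMeasure.coe_mk, integral_eq_zero_of_eigenfunction (ha m hm)
    (measurePreserving_add_left volume a) (measurableEmbedding_addLeft a) hmap]
  simpa [birkhoffAverage, birkhoffSum, add_left_iterate] using
    tendsto_birkhoffAverage_of_eigenfunction (ha m hm) hbdd hmap b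

lemma mFourier_torusOfAngles (m : ι → ℤ) (y : ι → ℝ) :
    mFourier m (torusOfAngles y) = Complex.exp ((∑ j, m j * y j : ℝ) * Complex.I) := by
  have hfourier (j : ι) : fourier (m j) (torusOfAngles y j) =
      Complex.exp ((m j * y j : ℝ) * Complex.I) := by
    rw [torusOfAngles_apply, fourier_coe_apply]
    congr 1
    push_cast
    field_simp
  rw [Complex.ofReal_sum, Finset.sum_mul, Complex.exp_sum]
  exact Finset.prod_congr rfl fun j _ => hfourier j

lemma mFourier_torusOfAngles_eq_one_iff (m : ι → ℤ) (y : ι → ℝ) :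
    mFourier m (torusOfAngles y) = 1 ↔ ∃ N : ℤ, ∑ j, m j * y j = N * (2 * Real.pi) := by
  rw [mFourier_torusOfAngles, Complex.exp_eq_one_iff]
  refine exists_congr fun N => ?_
  rw [← mul_assoc, mul_left_inj' Complex.I_ne_zero]
  norm_cast

lemma mFourier_torusOfAngles_ne_one {d : ℕ} {θ : Fin d → ℝ}
    (hθ : LinearIndependent ℚ (Fin.cons Real.pi θ : Fin (d + 1) → ℝ)) {m : Fin d → ℤ}
    (hm : m ≠ 0) : mFourier m (torusOfAngles θ) ≠ 1 := by
  rw [Ne, mFourier_torusOfAngles_eq_one_iff]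
  rintro ⟨N, hN⟩
  have hcoeff := Fintype.linearIndependent_iff.1 hθ (Fin.cons (-2 * N) fun j => (m j : ℚ)) <| by
    simp only [Fin.sum_univ_succ, Fin.cons_zero, Fin.cons_succ, Rat.smul_def]
    push_cast
    rw [hN]
    ring
  exact hm <| funext fun j => by simpa using hcoeff j.succ

lemma measurePreserving_unitAddTorus_mk :
    MeasurePreserving (fun (u : ι → ℝ) j => (u j : UnitAddCircle))
      (volume.restrict (Set.univ.pi fun _ => Set.Icc 0 1)) volume := by
  have h := measurePreserving_pi _ _ fun _ : ι => UnitAddCircle.measurePreserving_mk 0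
  simp only [zero_add, restrict_Ioc_eq_restrict_Icc] at h
  rwa [← Measure.restrict_pi_pi] at h

lemma volume_cube_inter_preimage_torusOfAngles {s : Set (UnitAddTorus ι)} (hs : MeasurableSet s) :
    volume {y : ι → ℝ | (∀ j, y j ∈ Set.Icc (0 : ℝ) (2 * Real.pi)) ∧ torusOfAngles y ∈ s} =
      ENNReal.ofReal ((2 * Real.pi) ^ Fintype.card ι) * volume s := by
  have hpos : 0 < 2 * Real.pi := by positivity
  have hscale : {y : ι → ℝ | (∀ j, y j ∈ Set.Icc (0 : ℝ) (2 * Real.pi)) ∧ torusOfAngles y ∈ s} =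
      (fun y => (2 * Real.pi)⁻¹ • y) ⁻¹' ((fun (u : ι → ℝ) j => (u j : UnitAddCircle)) ⁻¹' s ∩
        Set.univ.pi fun _ => Set.Icc 0 1) := by
    ext y
    have hcoe : torusOfAngles y = fun j => (((2 * Real.pi)⁻¹ • y) j : UnitAddCircle) := by
      ext j
      simp [torusOfAngles_apply, div_eq_inv_mul]
    have hmem (j : ι) : ((2 * Real.pi)⁻¹ • y) j ∈ Set.Icc 0 1 ↔
        y j ∈ Set.Icc 0 (2 * Real.pi) := by
      rw [Pi.smul_apply, smul_eq_mul, Set.mem_Icc, Set.mem_Icc, inv_mul_le_one₀ hpos,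
        mul_nonneg_iff_of_pos_left (by positivity)]
    simp only [Set.mem_ofPred_eq, Set.mem_preimage, Set.mem_inter_iff, Set.mem_univ_pi, hmem, hcoe,
      and_comm]
  rw [hscale, Measure.addHaar_preimage_smul _ (by positivity),
    ← Measure.restrict_apply (measurePreserving_unitAddTorus_mk.measurable hs),
    measurePreserving_unitAddTorus_mk.measure_preimage hs.nullMeasurableSet,
    Module.finrank_fintype_fun_eq_card, ← inv_pow, inv_inv, abs_of_pos (by positivity)]

/-- The function `α + ∑ β_j sin(y_j)`, descended to the torus `(ℝ/ℤ)^ι`: the sine of an angle is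
the imaginary part of the first Fourier monomial. -/
noncomputable def sinSum (α : ℝ) (β : ι → ℝ) (x : UnitAddTorus ι) : ℝ :=
  α + ∑ j, β j * (fourier 1 (x j)).im

lemma continuous_sinSum (α : ℝ) (β : ι → ℝ) : Continuous (sinSum α β) := by
  unfold sinSum
  fun_prop

lemma sinSum_torusOfAngles (α : ℝ) (β y : ι → ℝ) :
    sinSum α β (torusOfAngles y) = α + ∑ j, β j * Real.sin (y j) := by
  unfold sinSum
  congr! 3 with j
  rw [torusOfAngles_apply, fourier_coe_apply, ← Complex.exp_ofReal_mul_I_im]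
  congr 2
  push_cast
  field_simp

end Torus

lemma ae_sum_ne {ι : Type*} [Fintype ι] {g : ι → ℝ → ℝ} (hg : ∀ j, Measurable (g j)) {i : ι}
    (hi : ∀ c, ∀ᵐ t, g i t ≠ c) (c : ℝ) : ∀ᵐ y : ι → ℝ, ∑ j, g j (y j) ≠ c := by
  classical
  have hmeas : MeasurableSet {y : ι → ℝ | ∑ j, g j (y j) ≠ c} :=
    (measurableSet_eq_fun (by fun_prop) measurable_const).compl
  refine ae_mem_of_ae_add_linearMap_mem (LinearMap.single ℝ (fun _ : ι => ℝ) i) volume volume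
    hmeas fun y => ?_
  have hline (t : ℝ) : ∑ j, g j ((y + LinearMap.single ℝ (fun _ : ι => ℝ) i t) j) =
      g i (y i + t) + ∑ j ∈ Finset.univ.erase i, g j (y j) := by
    rw [← Finset.add_sum_erase _ _ (Finset.mem_univ i)]
    congr! 2 with j hj
    · simp
    · simp [Finset.ne_of_mem_erase hj]
  have hshift := (measurePreserving_add_left volume (y i)).quasiMeasurePreserving.ae
    (hi (c - ∑ j ∈ Finset.univ.erase i, g j (y j)))
  filter_upwards [hshift] with t ht h
  exact ht (eq_sub_of_add_eq ((hline t).symm.trans h))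

lemma ae_sin_ne (c : ℝ) : ∀ᵐ t, Real.sin t ≠ c := by
  by_cases hc : ∃ t₀, Real.sin t₀ = c
  · obtain ⟨t₀, rfl⟩ := hc
    have hsol : ∀ᵐ t, ∀ k : ℤ, t ≠ 2 * k * Real.pi + t₀ ∧ t ≠ (2 * k + 1) * Real.pi - t₀ :=
      ae_all_iff.2 fun k => (Measure.ae_ne volume _).and (Measure.ae_ne volume _)
    filter_upwards [hsol] with t ht h
    obtain ⟨k, hk | hk⟩ := Real.sin_eq_sin_iff.1 h.symm
    exacts [(ht k).1 hk, (ht k).2 hk]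
  · exact .of_forall fun t ht => hc ⟨t, ht⟩

lemma ae_add_sum_mul_sin_ne_zero {ι : Type*} [Fintype ι] {α : ℝ} {β : ι → ℝ}
    (hnz : α ≠ 0 ∨ ∃ j, β j ≠ 0) : ∀ᵐ y : ι → ℝ, α + ∑ j, β j * Real.sin (y j) ≠ 0 := by
  by_cases hβ : ∃ j, β j ≠ 0
  · obtain ⟨i, hi⟩ := hβ
    have hterm (c : ℝ) : ∀ᵐ t, β i * Real.sin t ≠ c := by
      filter_upwards [ae_sin_ne (c / β i)] with t ht h
      exact ht (eq_div_of_mul_eq hi (mul_comm (β i) _ ▸ h))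
    filter_upwards [ae_sum_ne (g := fun j t => β j * Real.sin t) (by fun_prop) hterm (-α)]
      with y hy h
    exact hy (eq_neg_of_add_eq_zero_right h)
  · push Not at hβ
    simpa [hβ] using hnz

lemma ae_sinSum_ne_zero {ι : Type*} [Fintype ι] {α : ℝ} {β : ι → ℝ}
    (hnz : α ≠ 0 ∨ ∃ j, β j ≠ 0) : ∀ᵐ x, sinSum α β x ≠ 0 := by
  have hmeas : MeasurableSet {x | sinSum α β x = 0} :=
    measurableSet_eq_fun (continuous_sinSum α β).measurable measurable_const
  have hcube := volume_cube_inter_preimage_torusOfAngles hmeas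
  rw [measure_mono_null (fun y hy => (sinSum_torusOfAngles α β y).symm.trans hy.2)
    (measure_eq_zero_iff_ae_notMem.2 (ae_add_sum_mul_sin_ne_zero hnz))] at hcube
  exact measure_eq_zero_iff_ae_notMem.1 ((mul_eq_zero.1 hcube.symm).resolve_left
    (ENNReal.ofReal_pos.2 (by positivity)).ne')

lemma card_filter_Icc_one (P : ℕ → Prop) [DecidablePred P] (n : ℕ) :
    ((Finset.Icc 1 n).filter P).card = Nat.count (fun k => P (k + 1)) n := by
  have himage : Finset.Icc 1 n = (Finset.range n).map (addRightEmbedding 1) := by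
    rw [Finset.range_eq_Ico, Finset.map_add_right_Ico, zero_add, Finset.Ico_add_one_right_eq_Icc]
  rw [himage, Finset.filter_map, Finset.card_map, Nat.count_eq_card_filter_range]
  rfl

open scoped Classical in
/-- (Equidistribution density computation.) If `π, θ_1, …, θ_d` are linearly
independent over `ℚ`, `α ≠ 0` or some `β_j ≠ 0`, and `x_k → 0`, then the natural density of
`{k : α + ∑_j β_j sin(kθ_j + ω_j) > x_k}` exists and equals the normalized Lebesgue measure of
`{y ∈ [0,2π]^d : α + ∑_j β_j sin(y_j) > 0}`. -/
theorem density_sin_sum (d : ℕ) (hd : 1 ≤ d) (θ : Fin d → ℝ)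
    (hGSH : LinearIndependent ℚ (Fin.cons Real.pi θ : Fin (d + 1) → ℝ))
    (α : ℝ) (β ω : Fin d → ℝ) (hnz : α ≠ 0 ∨ ∃ j, β j ≠ 0)
    (x : ℕ → ℝ) (hx : Tendsto x atTop (nhds 0)) :
    Tendsto (fun n : ℕ =>
        (((Finset.Icc 1 n).filter fun k =>
            x k < α + ∑ j, β j * Real.sin (k * θ j + ω j)).card : ℝ) / n)
      atTop
      (nhds ((volume {y : Fin d → ℝ |
          (∀ j, y j ∈ Set.Icc (0 : ℝ) (2 * Real.pi)) ∧
            0 < α + ∑ j, β j * Real.sin (y j)}).toReal / (2 * Real.pi) ^ d)) := by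
  have hequi := equidistributed_nsmul_add (fun _ hm => mFourier_torusOfAngles_ne_one hGSH hm)
    (torusOfAngles (θ + ω))
  have hlim := hequi.tendsto_count_lt_div (continuous_sinSum α β)
    (ae_sinSum_ne_zero hnz) ((tendsto_add_atTop_iff_nat 1).2 hx)
  have horbit (k : ℕ) : sinSum α β (k • torusOfAngles θ + torusOfAngles (θ + ω)) =
      α + ∑ j, β j * Real.sin ((k + 1 : ℕ) * θ j + ω j) := by
    rw [← map_nsmul, ← map_add, sinSum_torusOfAngles]
    simp [add_mul, add_assoc]
  have hvol := volume_cube_inter_preimage_torusOfAngles (measurableSet_lt measurable_const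
    (continuous_sinSum α β).measurable : MeasurableSet {x | 0 < sinSum α β x})
  simp only [Set.mem_ofPred_eq, sinSum_torusOfAngles, Fintype.card_fin] at hvol
  rw [hvol, ENNReal.toReal_mul, ENNReal.toReal_ofReal (by positivity),
    mul_div_cancel_left₀ _ (by positivity)]
  simpa only [card_filter_Icc_one, horbit, measureReal_def, ProbabilityMeasure.coe_mk] using hlim
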